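/- Let σ be a positive Borel measure on ℝ^d finite on dyadic cubes, let 1 < s < ∞, let {α_Q}_{Q∈𝒟} ⊂ [0,∞), and let Q₀ ∈ 𝒟. Define A₁ := ∫_{Q₀} ( ∑_{Q⊆Q₀} (α_Q / σ(Q)) 1_Q )^s dσ and A₂ := ∑_{Q⊆Q₀} α_Q ( σ(Q)^{-1} ∑_{Q'⊆Q} α_{Q'} )^{s−1}. Then A₁ ≤ c(s) A₂, where c(s) = s for 1 < s ≤ 2 and c(s) = ( s(s−1)⋯(s−k) )^{(s−1)/(s−k−1)} for 2 < s < ∞, where k is the smallest integer greater than s − 2. -/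

import Mathlib

open MeasureTheory ENNReal NNReal Set

noncomputable section

/-- The dyadic cube `Q = 2^{-k}(m + [0,1)^d)` in `ℝ^d`, indexed by `(k, m) ∈ ℤ × ℤ^d`. -/
def dyadicCube (d : ℕ) (Q : ℤ × (Fin d → ℤ)) : Set (Fin d → ℝ) :=
  {x | ∀ i, (Q.2 i : ℝ) * (2 : ℝ) ^ (-Q.1) ≤ x i ∧ x i < ((Q.2 i : ℝ) + 1) * (2 : ℝ) ^ (-Q.1)}

/-- The constant `c(s)`: `c(s) = s` for `1 < s ≤ 2` and
`c(s) = (s(s-1)⋯(s-k))^{(s-1)/(s-k-1)}` for `2 < s < ∞`, where `k = ⌈s-2⌉` is the smallest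
integer greater than `s - 2`. -/
def lemmaConst (s : ℝ) : ℝ :=
  if s ≤ 2 then s
  else (∏ j ∈ Finset.range (⌈s - 2⌉₊ + 1), (s - (j : ℝ))) ^
    ((s - 1) / (s - (⌈s - 2⌉₊ : ℝ) - 1))

/-!
Order the cubes by inclusion. The cubes containing a point form a chain, so with
`fᵢ = aᵢ 1_{Eᵢ}(x)`, `Lᵢ = ∑_{j ≤ i} fⱼ` and `Uᵢ = ∑_{j ≥ i} fⱼ`, telescoping
`(x + y) ^ p - y ^ p ≤ p x (x + y) ^ (p - 1)` along the chain gives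
`(∑ f) ^ p ≤ p ∑ fᵢ Lᵢ ^ (p - 1)`. Applying this again to `Lᵢ` and exchanging the sums
trades one power of `L` for one of `U`, whence
`(∑ f) ^ s ≤ s (s - 1) ⋯ (s - k) ∑ fᵢ Uᵢ ^ k Lᵢ ^ (s - k - 1)`.

The choice of `k` puts the exponent `s - k - 1` in `(0, 1]`. Enlarge `Uᵢ` to the constant
`∑_{j ≥ i} aⱼ` and integrate, using concavity of `t ^ (s - k - 1)` on each `Eᵢ`. Hölder's
inequality for the weights `aᵢ σ(Eᵢ)` with `θ = (s - k - 1) / (s - 1)` then bounds `A₁` by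
`s (s - 1) ⋯ (s - k) A₂ ^ θ (∑ aᵢ σ(Eᵢ) Uᵢ ^ (s - 1)) ^ (1 - θ)`. The last sum is at most
`A₁`, since `Uᵢ ≤ ∑ aⱼ 1_{Eⱼ}` on `Eᵢ`. If `A₁` is finite it can be absorbed on the left, and
finiteness is arranged by keeping only finitely many weights.
-/

section Sequences

lemma add_rpow_le_mul_add_rpow_of_nonneg {x y p : ℝ} (hx : 0 ≤ x) (hy : 0 ≤ y) (hp : 1 ≤ p) :
    (x + y) ^ p ≤ p * (x * (x + y) ^ (p - 1)) + y ^ p := by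
  rcases (add_nonneg hx hy).eq_or_lt with hxy | hxy
  · obtain ⟨rfl, rfl⟩ := (add_eq_zero_iff_of_nonneg hx hy).1 hxy.symm
    simp
  have bernoulli : 1 - p * (x / (x + y)) ≤ (y / (x + y)) ^ p := by
    have h := one_add_mul_self_le_rpow_one_add
      (neg_le_neg ((div_le_one hxy).2 (le_add_of_nonneg_right hy))) hp
    rwa [mul_neg, ← sub_eq_add_neg, ← sub_eq_add_neg, one_sub_div hxy.ne',
      add_sub_cancel_left] at h
  rw [Real.div_rpow hy hxy.le, le_div_iff₀ (by positivity)] at bernoulli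
  have expand : (1 - p * (x / (x + y))) * (x + y) ^ p =
      (x + y) ^ p - p * (x * (x + y) ^ (p - 1)) := by
    rw [Real.rpow_sub_one hxy.ne']
    ring
  linarith

lemma add_rpow_le_mul_add_rpow (x y : ℝ≥0∞) {p : ℝ} (hp : 1 ≤ p) :
    (x + y) ^ p ≤ ENNReal.ofReal p * (x * (x + y) ^ (p - 1)) + y ^ p := by
  have hp₀ : 0 < p := by linarith
  rcases eq_or_ne y ∞ with rfl | hy
  · simp [hp₀]
  rcases eq_or_ne x ∞ with rfl | hx
  · simp [ENNReal.top_mul, ENNReal.mul_top, hp₀, hp]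
  lift x to ℝ≥0 using hx
  lift y to ℝ≥0 using hy
  rw [← ENNReal.coe_add, ← ENNReal.coe_rpow_of_nonneg _ (sub_nonneg.2 hp),
    ← ENNReal.coe_rpow_of_nonneg _ hp₀.le, ← ENNReal.coe_rpow_of_nonneg _ hp₀.le, ENNReal.ofReal]
  norm_cast
  rw [← NNReal.coe_le_coe]
  push_cast
  rw [Real.coe_toNNReal _ hp₀.le]
  exact add_rpow_le_mul_add_rpow_of_nonneg x.2 y.2 hp

lemma rpow_tsum_eq_iSup_rpow_sum {ι : Type*} (f : ι → ℝ≥0∞) {p : ℝ} (hp : 0 < p) :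
    (∑' i, f i) ^ p = ⨆ S : Finset ι, (∑ i ∈ S, f i) ^ p := by
  rw [ENNReal.tsum_eq_iSup_sum]
  exact (ENNReal.orderIsoRpow p hp).map_iSup _

lemma tsum_mul_rpow_mul_rpow_le {ι : Type*} (w f g : ι → ℝ≥0∞) {p q : ℝ} (hp : 0 ≤ p)
    (hq : 0 ≤ q) (hpq : p + q = 1) :
    ∑' i, w i * (f i ^ p * g i ^ q) ≤ (∑' i, w i * f i) ^ p * (∑' i, w i * g i) ^ q := by
  let _ : MeasurableSpace ι := ⊤
  simpa [lintegral_sum_measure] using ENNReal.lintegral_mul_norm_pow_le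
    (μ := Measure.sum fun i => w i • Measure.dirac i)
    (measurable_from_top (f := f)).aemeasurable (measurable_from_top (f := g)).aemeasurable
    hp hq hpq

lemma le_rpow_inv_mul_of_le_mul_rpow_mul_rpow {x y c : ℝ≥0∞} {θ : ℝ} (hx : x ≠ ∞) (hθ₀ : 0 < θ)
    (hθ₁ : θ ≤ 1) (h : x ≤ c * (y ^ θ * x ^ (1 - θ))) : x ≤ c ^ θ⁻¹ * y := by
  rcases eq_or_ne x 0 with rfl | hx₀
  · exact zero_le
  have hpow : x ^ θ ≤ c * y ^ θ := by
    rw [← ENNReal.mul_le_mul_iff_left (c := x ^ (1 - θ))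
      (by simp [ENNReal.rpow_eq_zero_iff, hx₀, hx])
      (ENNReal.rpow_ne_top_of_nonneg (sub_nonneg.2 hθ₁) hx),
      ← ENNReal.rpow_add _ _ hx₀ hx, add_sub_cancel, ENNReal.rpow_one, mul_assoc]
    exact h
  calc x ≤ (c * y ^ θ) ^ θ⁻¹ := (ENNReal.le_rpow_inv_iff hθ₀).2 hpow
    _ = c ^ θ⁻¹ * y := by
      rw [ENNReal.mul_rpow_of_nonneg _ _ (inv_nonneg.2 hθ₀.le), ENNReal.rpow_rpow_inv hθ₀.ne']

variable {ι : Type*} [Preorder ι]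

lemma rpow_sum_le_of_isChain (f : ι → ℝ≥0∞) {p : ℝ} (hp : 1 ≤ p) (S : Finset ι)
    (hS : IsChain (· ≤ ·) (S : Set ι)) :
    (∑ i ∈ S, f i) ^ p ≤
      ENNReal.ofReal p * ∑ i ∈ S, f i * (∑' j : Iic i, f j) ^ (p - 1) := by
  classical
  induction S using Finset.strongInduction with
  | H S ih =>
    rcases S.eq_empty_or_nonempty with rfl | hne
    · simp [show 0 < p by linarith]
    obtain ⟨m, hm, hmax⟩ := S.exists_maximal hne
    have le_max : ∀ i ∈ S, i ≤ m := fun i hi => (hS.total hi hm).elim id (hmax hi)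
    have sum_le : ∑ i ∈ S, f i ≤ ∑' j : Iic m, f j := by
      rw [← Finset.tsum_subtype]
      exact ENNReal.tsum_mono_subtype f le_max
    have ih_erase := ih (S.erase m) (Finset.erase_ssubset hm)
      (hS.mono (Finset.coe_subset.2 (S.erase_subset m)))
    have hsplit := Finset.add_sum_erase S f hm
    calc (∑ i ∈ S, f i) ^ p
        ≤ ENNReal.ofReal p * (f m * (∑ i ∈ S, f i) ^ (p - 1)) + (∑ i ∈ S.erase m, f i) ^ p := by
          rw [← hsplit]
          exact add_rpow_le_mul_add_rpow _ _ hp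
      _ ≤ ENNReal.ofReal p * (f m * (∑' j : Iic m, f j) ^ (p - 1)) + ENNReal.ofReal p *
            ∑ i ∈ S.erase m, f i * (∑' j : Iic i, f j) ^ (p - 1) := by
          have := sub_nonneg.2 hp
          gcongr
      _ = ENNReal.ofReal p * ∑ i ∈ S, f i * (∑' j : Iic i, f j) ^ (p - 1) := by
          rw [← mul_add, Finset.add_sum_erase S (fun i => f i * (∑' j : Iic i, f j) ^ (p - 1)) hm]

lemma rpow_tsum_le_of_isChain_support {f : ι → ℝ≥0∞}
    (hf : IsChain (· ≤ ·) (Function.support f)) {p : ℝ} (hp : 1 ≤ p) :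
    (∑' i, f i) ^ p ≤ ENNReal.ofReal p * ∑' i, f i * (∑' j : Iic i, f j) ^ (p - 1) := by
  classical
  rw [rpow_tsum_eq_iSup_rpow_sum f (by linarith)]
  refine iSup_le fun S => ?_
  rw [← Finset.sum_filter_ne_zero]
  have hS : IsChain (· ≤ ·) (S.filter (f · ≠ 0) : Set ι) :=
    hf.mono fun i hi => (Finset.mem_filter.1 hi).2
  refine (rpow_sum_le_of_isChain f hp _ hS).trans ?_
  gcongr
  exact ENNReal.sum_le_tsum _

lemma rpow_tsum_Iic_le_of_isChain_support {f : ι → ℝ≥0∞}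
    (hf : IsChain (· ≤ ·) (Function.support f)) {p : ℝ} (hp : 1 ≤ p) (i : ι) :
    (∑' j : Iic i, f j) ^ p ≤
      ENNReal.ofReal p * ∑' j : Iic i, f j * (∑' l : Iic (j : ι), f l) ^ (p - 1) := by
  have hchain : IsChain (· ≤ ·) (Function.support ((Iic i).indicator f)) :=
    hf.mono (by simp)
  have h := rpow_tsum_le_of_isChain_support hchain hp
  rw [← tsum_subtype] at h
  refine h.trans ?_
  rw [tsum_subtype (Iic i) fun j => f j * (∑' l : Iic j, f l) ^ (p - 1)]
  simp only [indicator_mul_left]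
  have := sub_nonneg.2 hp
  gcongr
  exact indicator_le_self _ _ _

lemma tsum_mul_tsum_Iic_comm (f g : ι → ℝ≥0∞) :
    ∑' i, f i * ∑' j : Iic i, g j = ∑' j, (∑' i : Ici j, f i) * g j := by
  simp only [tsum_subtype (Iic _), tsum_subtype (Ici _), ← ENNReal.tsum_mul_left,
    ← ENNReal.tsum_mul_right]
  rw [ENNReal.tsum_comm]
  refine tsum_congr fun j => tsum_congr fun i => ?_
  by_cases hij : j ≤ i <;> simp [hij]

lemma tsum_Ici_mul_pow_le (f : ι → ℝ≥0∞) (k : ℕ) (j : ι) :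
    ∑' i : Ici j, f i * (∑' l : Ici (i : ι), f l) ^ k ≤ (∑' l : Ici j, f l) ^ (k + 1) := by
  rw [pow_succ', ← ENNReal.tsum_mul_right]
  gcongr with i
  exact ENNReal.tsum_mono_subtype f (Ici_subset_Ici.2 i.2)

lemma tsum_mul_pow_mul_rpow_le_of_isChain_support {f : ι → ℝ≥0∞}
    (hf : IsChain (· ≤ ·) (Function.support f)) {p : ℝ} (hp : 1 ≤ p) (k : ℕ) :
    ∑' i, f i * (∑' j : Ici i, f j) ^ k * (∑' j : Iic i, f j) ^ p ≤ ENNReal.ofReal p *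
      ∑' i, f i * (∑' j : Ici i, f j) ^ (k + 1) * (∑' j : Iic i, f j) ^ (p - 1) :=
  calc ∑' i, f i * (∑' j : Ici i, f j) ^ k * (∑' j : Iic i, f j) ^ p
      ≤ ∑' i, f i * (∑' j : Ici i, f j) ^ k *
          (ENNReal.ofReal p * ∑' j : Iic i, f j * (∑' l : Iic (j : ι), f l) ^ (p - 1)) := by
        gcongr with i
        exact rpow_tsum_Iic_le_of_isChain_support hf hp i
    _ = ENNReal.ofReal p * ∑' j, (∑' i : Ici j, f i * (∑' l : Ici (i : ι), f l) ^ k) *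
          (f j * (∑' l : Iic j, f l) ^ (p - 1)) := by
        rw [← tsum_mul_tsum_Iic_comm (fun i => f i * (∑' j : Ici i, f j) ^ k),
          ← ENNReal.tsum_mul_left]
        simp only [mul_left_comm]
    _ ≤ ENNReal.ofReal p * ∑' j, (∑' l : Ici j, f l) ^ (k + 1) *
          (f j * (∑' l : Iic j, f l) ^ (p - 1)) := by
        gcongr with j
        exact tsum_Ici_mul_pow_le f k j
    _ = _ := by simp only [mul_left_comm, mul_assoc]

lemma rpow_tsum_le_descPochhammer_mul_tsum {f : ι → ℝ≥0∞}
    (hf : IsChain (· ≤ ·) (Function.support f)) {s : ℝ} (k : ℕ) (hk : k + 1 ≤ s) :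
    (∑' i, f i) ^ s ≤ ENNReal.ofReal ((descPochhammer ℝ (k + 1)).eval s) *
      ∑' i, f i * (∑' j : Ici i, f j) ^ k * (∑' j : Iic i, f j) ^ (s - k - 1) := by
  induction k with
  | zero => simpa using rpow_tsum_le_of_isChain_support hf (by simpa using hk)
  | succ k ih =>
    push_cast at hk
    have hexp : s - (k + 1 : ℕ) = s - k - 1 := by push_cast; ring
    rw [descPochhammer_succ_eval (k + 1), hexp,
      ENNReal.ofReal_mul (descPochhammer_nonneg (by push_cast; linarith)), mul_assoc]
    refine (ih (by linarith)).trans ?_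
    gcongr
    exact tsum_mul_pow_mul_rpow_le_of_isChain_support hf (by linarith) k

end Sequences

section Families

variable {X ι : Type*}

/-- The function `∑ᵢ aᵢ 1_{Eᵢ}`, whose `s`-th moment is estimated; for `aᵢ = αᵢ / σ(Eᵢ)` its
`s`-th moment is `A₁`. -/
def indicatorSum (E : ι → Set X) (a : ι → ℝ≥0∞) (x : X) : ℝ≥0∞ :=
  ∑' i, a i * (E i).indicator 1 x

lemma indicatorSum_indicator_finset (E : ι → Set X) (a : ι → ℝ≥0∞) (S : Finset ι) (x : X) :
    indicatorSum E ((S : Set ι).indicator a) x = ∑ i ∈ S, a i * (E i).indicator 1 x := by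
  rw [indicatorSum, sum_eq_tsum_indicator]
  exact tsum_congr fun i => (indicator_mul_left (S : Set ι) a fun i => (E i).indicator 1 x).symm

lemma indicatorSum_rpow_le_descPochhammer_mul_tsum [Preorder ι] {E : ι → Set X} {x : X}
    (hchain : IsChain (· ≤ ·) {i | x ∈ E i}) (a : ι → ℝ≥0∞) {s : ℝ} (k : ℕ) (hk : k + 1 ≤ s) :
    indicatorSum E a x ^ s ≤ ENNReal.ofReal ((descPochhammer ℝ (k + 1)).eval s) *
      ∑' i, a i * (∑' j : Ici i, a j) ^ k * ((E i).indicator 1 x *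
        (∑' j : Iic i, a j * (E j).indicator 1 x) ^ (s - k - 1)) := by
  have hsupport : IsChain (· ≤ ·) (Function.support fun i => a i * (E i).indicator 1 x) :=
    hchain.mono fun i hi => by
      by_contra hx
      exact hi (by simp [indicator_of_notMem (show x ∉ E i from hx)])
  have le_weight : ∀ i, a i * (E i).indicator 1 x ≤ a i := fun i =>
    mul_le_of_le_one_right' (indicator_le_self' (fun _ _ => zero_le) x)
  refine (rpow_tsum_le_descPochhammer_mul_tsum hsupport k hk).trans
    (mul_le_mul_right (ENNReal.tsum_le_tsum fun i => ?_) _)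
  rw [mul_right_comm (a i), mul_assoc (a i * _)]
  gcongr with j
  exact le_weight j

variable [MeasurableSpace X]

/-- When `j ≤ i` implies `Eⱼ ⊆ Eᵢ`, the mean over `Eᵢ` of the part of `∑ⱼ aⱼ 1_{Eⱼ}` indexed by
`j ≤ i`; for `aⱼ = αⱼ / σ(Eⱼ)` it is `σ(Eᵢ)⁻¹ ∑_{j ≤ i} αⱼ`. For `σ(Eᵢ) = 0` it is `0 / 0 = 0`. -/
def lowerMean [Preorder ι] (σ : Measure X) (E : ι → Set X) (a : ι → ℝ≥0∞) (i : ι) : ℝ≥0∞ :=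
  (∑' j : Iic i, a j * σ (E j)) / σ (E i)

lemma setLIntegral_rpow_le_measure_mul_laverage_rpow {σ : Measure X} {A : Set X} (hA : σ A ≠ ∞)
    {g : X → ℝ≥0∞} (hg : AEMeasurable g (σ.restrict A)) {p : ℝ} (hp₀ : 0 ≤ p) (hp₁ : p ≤ 1) :
    ∫⁻ x in A, g x ^ p ∂σ ≤ σ A * (⨍⁻ x in A, g x ∂σ) ^ p := by
  rcases eq_or_ne (σ A) 0 with hA₀ | hA₀
  · simp [Measure.restrict_eq_zero.2 hA₀]
  calc ∫⁻ x in A, g x ^ p ∂σ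
      ≤ (∫⁻ x in A, g x ∂σ) ^ p * σ A ^ (1 - p) := by
        simpa using ENNReal.lintegral_mul_norm_pow_le (μ := σ.restrict A) hg
          (aemeasurable_const (b := 1)) hp₀ (sub_nonneg.2 hp₁) (by ring)
    _ = σ A * (⨍⁻ x in A, g x ∂σ) ^ p := by
        rw [setLAverage_eq, ENNReal.div_rpow_of_nonneg _ _ hp₀, ENNReal.rpow_sub _ _ hA₀ hA,
          ENNReal.rpow_one, ← mul_div_assoc, ← mul_div_assoc, mul_comm]

lemma measurable_const_mul_indicator_one {A : Set X} (hA : MeasurableSet A) (c : ℝ≥0∞) :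
    Measurable fun x => c * A.indicator 1 x :=
  (measurable_one.indicator hA).const_mul c

lemma lintegral_const_mul_indicator_one (σ : Measure X) {A : Set X} (hA : MeasurableSet A)
    (c : ℝ≥0∞) :
    ∫⁻ x, c * A.indicator 1 x ∂σ = c * σ A := by
  rw [lintegral_const_mul _ (measurable_one.indicator hA), lintegral_indicator_one hA]

variable {E : ι → Set X}

lemma lintegral_indicatorSum_rpow_eq_iSup [Countable ι] (σ : Measure X)
    (hE : ∀ i, MeasurableSet (E i)) (a : ι → ℝ≥0∞) {s : ℝ} (hs : 0 < s) :
    ∫⁻ x, indicatorSum E a x ^ s ∂σ =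
      ⨆ S : Finset ι, ∫⁻ x, indicatorSum E ((S : Set ι).indicator a) x ^ s ∂σ := by
  simp only [indicatorSum_indicator_finset]
  simp only [indicatorSum, rpow_tsum_eq_iSup_rpow_sum _ hs]
  refine lintegral_iSup_directed (fun S => ?_) (Monotone.directed_le fun S T hST x => ?_)
  · exact ((Finset.measurable_sum _ fun i _ =>
      measurable_const_mul_indicator_one (hE i) (a i)).pow_const s).aemeasurable
  · exact ENNReal.rpow_le_rpow (Finset.sum_le_sum_of_subset hST) hs.le

lemma lintegral_indicatorSum_finset_rpow_ne_top {σ : Measure X} (hE : ∀ i, MeasurableSet (E i))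
    (hσ : ∀ i, σ (E i) ≠ ∞) {a : ι → ℝ≥0∞} (ha : ∀ i, a i ≠ ∞) {s : ℝ} (hs : 1 ≤ s)
    (S : Finset ι) : ∫⁻ x, indicatorSum E ((S : Set ι).indicator a) x ^ s ∂σ ≠ ∞ := by
  have hs₀ : 0 < s := by linarith
  have hpow : ∀ i x, (a i * (E i).indicator 1 x) ^ s = a i ^ s * (E i).indicator 1 x := by
    intro i x
    by_cases hx : x ∈ E i <;> simp [hx, hs₀]
  have hbound : ∀ x, indicatorSum E ((S : Set ι).indicator a) x ^ s ≤
      (S.card : ℝ≥0∞) ^ (s - 1) * ∑ i ∈ S, a i ^ s * (E i).indicator 1 x := fun x => by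
    simp only [indicatorSum_indicator_finset, ← hpow]
    exact ENNReal.rpow_sum_le_const_mul_sum_rpow S _ hs
  refine ne_top_of_le_ne_top ?_ (lintegral_mono hbound)
  have hmeas : ∀ i, Measurable fun x => a i ^ s * (E i).indicator 1 x := fun i =>
    measurable_const_mul_indicator_one (hE i) _
  rw [lintegral_const_mul _ (Finset.measurable_sum _ fun i _ => hmeas i),
    lintegral_finsetSum _ fun i _ => hmeas i]
  simp only [lintegral_const_mul_indicator_one σ (hE _)]
  refine ENNReal.mul_ne_top
    (ENNReal.rpow_ne_top_of_nonneg (sub_nonneg.2 hs) (ENNReal.natCast_ne_top _)) ?_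
  exact ENNReal.sum_ne_top.2 fun i _ =>
    ENNReal.mul_ne_top (ENNReal.rpow_ne_top_of_nonneg hs₀.le (ha i)) (hσ i)

variable [Preorder ι]

lemma measurable_tsum_Iic_mul_indicator_one [Countable ι] (hE : ∀ i, MeasurableSet (E i))
    (a : ι → ℝ≥0∞) (i : ι) : Measurable fun x => ∑' j : Iic i, a j * (E j).indicator 1 x :=
  Measurable.tsum fun j => measurable_const_mul_indicator_one (hE j) (a j)

lemma setLIntegral_tsum_Iic_rpow_le_lowerMean [Countable ι] {σ : Measure X}
    (hE : ∀ i, MeasurableSet (E i)) (a : ι → ℝ≥0∞) {i : ι} (hσ : σ (E i) ≠ ∞) {p : ℝ}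
    (hp₀ : 0 ≤ p) (hp₁ : p ≤ 1) :
    ∫⁻ x in E i, (∑' j : Iic i, a j * (E j).indicator 1 x) ^ p ∂σ ≤
      σ (E i) * lowerMean σ E a i ^ p := by
  refine (setLIntegral_rpow_le_measure_mul_laverage_rpow hσ
    (measurable_tsum_Iic_mul_indicator_one hE a i).aemeasurable hp₀ hp₁).trans ?_
  rw [setLAverage_eq, lowerMean]
  gcongr
  refine (setLIntegral_le_lintegral _ _).trans_eq ?_
  rw [lintegral_tsum fun j : Iic i =>
    (measurable_const_mul_indicator_one (hE j) (a j)).aemeasurable]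
  simp only [lintegral_const_mul_indicator_one σ (hE _)]

lemma lintegral_indicatorSum_rpow_le_tsum_mul_lowerMean_rpow [Countable ι] {σ : Measure X}
    (hE : ∀ i, MeasurableSet (E i)) (hσ : ∀ i, σ (E i) ≠ ∞)
    (hchain : ∀ x, IsChain (· ≤ ·) {i | x ∈ E i}) (a : ι → ℝ≥0∞) {s : ℝ} (k : ℕ)
    (hk₁ : k + 1 ≤ s) (hk₂ : s ≤ k + 2) :
    ∫⁻ x, indicatorSum E a x ^ s ∂σ ≤ ENNReal.ofReal ((descPochhammer ℝ (k + 1)).eval s) *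
      ∑' i, a i * σ (E i) * ((∑' j : Ici i, a j) ^ k * lowerMean σ E a i ^ (s - k - 1)) := by
  have hmeas : ∀ i, Measurable fun x => (E i).indicator 1 x *
      (∑' j : Iic i, a j * (E j).indicator 1 x) ^ (s - k - 1) := fun i =>
    (measurable_one.indicator (hE i)).mul
      ((measurable_tsum_Iic_mul_indicator_one hE a i).pow_const _)
  refine (lintegral_mono fun x =>
    indicatorSum_rpow_le_descPochhammer_mul_tsum (hchain x) a k hk₁).trans ?_
  rw [lintegral_const_mul _ (Measurable.tsum fun i => (hmeas i).const_mul _),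
    lintegral_tsum fun i => ((hmeas i).const_mul _).aemeasurable]
  refine mul_le_mul_right (ENNReal.tsum_le_tsum fun i => ?_) _
  calc ∫⁻ x, a i * (∑' j : Ici i, a j) ^ k * ((E i).indicator 1 x *
        (∑' j : Iic i, a j * (E j).indicator 1 x) ^ (s - k - 1)) ∂σ
      = a i * (∑' j : Ici i, a j) ^ k *
          ∫⁻ x in E i, (∑' j : Iic i, a j * (E j).indicator 1 x) ^ (s - k - 1) ∂σ := by
        rw [lintegral_const_mul _ (hmeas i), ← lintegral_indicator (hE i)]
        congr 1
        refine lintegral_congr fun x => ?_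
        by_cases hx : x ∈ E i <;> simp [hx]
    _ ≤ a i * (∑' j : Ici i, a j) ^ k * (σ (E i) * lowerMean σ E a i ^ (s - k - 1)) := by
        gcongr
        exact setLIntegral_tsum_Iic_rpow_le_lowerMean hE a (hσ i) (by linarith) (by linarith)
    _ = a i * σ (E i) * ((∑' j : Ici i, a j) ^ k * lowerMean σ E a i ^ (s - k - 1)) :=
        mul_mul_mul_comm _ _ _ _

lemma tsum_mul_tsum_Ici_rpow_le_lintegral_indicatorSum_rpow [Countable ι] {σ : Measure X}
    (hE : ∀ i, MeasurableSet (E i)) (hmono : Monotone E) (a : ι → ℝ≥0∞) {s : ℝ} (hs : 1 ≤ s) :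
    ∑' i, a i * σ (E i) * (∑' j : Ici i, a j) ^ (s - 1) ≤ ∫⁻ x, indicatorSum E a x ^ s ∂σ := by
  have hs' := sub_nonneg.2 hs
  have upper_le : ∀ i, ∀ x ∈ E i, ∑' j : Ici i, a j ≤ indicatorSum E a x := fun i x hx => by
    rw [tsum_subtype]
    refine ENNReal.tsum_le_tsum fun j => indicator_apply_le' (fun hj => ?_) fun _ => zero_le
    simp [hmono (mem_Ici.1 hj) hx]
  calc ∑' i, a i * σ (E i) * (∑' j : Ici i, a j) ^ (s - 1)
      = ∫⁻ x, ∑' i, a i * (∑' j : Ici i, a j) ^ (s - 1) * (E i).indicator 1 x ∂σ := by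
        rw [lintegral_tsum fun i => (measurable_const_mul_indicator_one (hE i) _).aemeasurable]
        simp only [lintegral_const_mul_indicator_one σ (hE _), mul_right_comm]
    _ ≤ ∫⁻ x, ∑' i, a i * (E i).indicator 1 x * indicatorSum E a x ^ (s - 1) ∂σ := by
        refine lintegral_mono fun x => ENNReal.tsum_le_tsum fun i => ?_
        by_cases hx : x ∈ E i
        · simp only [indicator_of_mem hx, Pi.one_apply, mul_one]
          gcongr
          exact upper_le i x hx
        · simp [hx]
    _ = ∫⁻ x, indicatorSum E a x ^ s ∂σ := by
        refine lintegral_congr fun x => ?_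
        rw [ENNReal.tsum_mul_right, ← indicatorSum]
        nth_rw 1 [← ENNReal.rpow_one (indicatorSum E a x)]
        rw [← ENNReal.rpow_add_of_nonneg _ _ zero_le_one hs', add_sub_cancel]

lemma lintegral_indicatorSum_rpow_le_of_ne_top [Countable ι] {σ : Measure X}
    (hE : ∀ i, MeasurableSet (E i)) (hσ : ∀ i, σ (E i) ≠ ∞) (hmono : Monotone E)
    (hchain : ∀ x, IsChain (· ≤ ·) {i | x ∈ E i}) {a : ι → ℝ≥0∞} {s : ℝ} (k : ℕ)
    (hk₁ : k + 1 < s) (hk₂ : s ≤ k + 2) (hfin : ∫⁻ x, indicatorSum E a x ^ s ∂σ ≠ ∞) :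
    ∫⁻ x, indicatorSum E a x ^ s ∂σ ≤
      ENNReal.ofReal ((descPochhammer ℝ (k + 1)).eval s ^ ((s - 1) / (s - k - 1))) *
        ∑' i, a i * σ (E i) * lowerMean σ E a i ^ (s - 1) := by
  have : (0 : ℝ) ≤ k := k.cast_nonneg
  have hs : 0 < s - 1 := by linarith
  set θ := (s - k - 1) / (s - 1)
  have hθ₀ : 0 < θ := div_pos (by linarith) hs
  have hθ₁ : θ ≤ 1 := (div_le_one hs).2 (by linarith)
  have hθ : (s - 1) * θ = s - k - 1 := mul_div_cancel₀ _ hs.ne'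
  have hθ' : (s - 1) * (1 - θ) = k := by linarith
  have holder : ∑' i, a i * σ (E i) * ((∑' j : Ici i, a j) ^ k * lowerMean σ E a i ^ (s - k - 1)) ≤
      (∑' i, a i * σ (E i) * lowerMean σ E a i ^ (s - 1)) ^ θ *
        (∑' i, a i * σ (E i) * (∑' j : Ici i, a j) ^ (s - 1)) ^ (1 - θ) := by
    refine le_trans (le_of_eq ?_)
      (tsum_mul_rpow_mul_rpow_le _ _ _ hθ₀.le (sub_nonneg.2 hθ₁) (by ring))
    simp only [← ENNReal.rpow_mul, hθ, hθ', ENNReal.rpow_natCast, mul_comm]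
  have hpoch : 0 ≤ (descPochhammer ℝ (k + 1)).eval s :=
    descPochhammer_nonneg (by push_cast; linarith)
  rw [← inv_div (s - k - 1) (s - 1), ← ENNReal.ofReal_rpow_of_nonneg hpoch (inv_nonneg.2 hθ₀.le)]
  refine le_rpow_inv_mul_of_le_mul_rpow_mul_rpow hfin hθ₀ hθ₁ ?_
  calc ∫⁻ x, indicatorSum E a x ^ s ∂σ
      ≤ _ := lintegral_indicatorSum_rpow_le_tsum_mul_lowerMean_rpow hE hσ hchain a k hk₁.le hk₂
    _ ≤ _ := mul_le_mul_right holder _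
    _ ≤ ENNReal.ofReal ((descPochhammer ℝ (k + 1)).eval s) *
          ((∑' i, a i * σ (E i) * lowerMean σ E a i ^ (s - 1)) ^ θ *
            (∫⁻ x, indicatorSum E a x ^ s ∂σ) ^ (1 - θ)) := by
        have := sub_nonneg.2 hθ₁
        gcongr
        exact tsum_mul_tsum_Ici_rpow_le_lintegral_indicatorSum_rpow hE hmono a (by linarith)

lemma lintegral_indicatorSum_rpow_le [Countable ι] {σ : Measure X}
    (hE : ∀ i, MeasurableSet (E i)) (hσ : ∀ i, σ (E i) ≠ ∞) (hmono : Monotone E)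
    (hchain : ∀ x, IsChain (· ≤ ·) {i | x ∈ E i}) {a : ι → ℝ≥0∞} (ha : ∀ i, a i ≠ ∞) {s : ℝ}
    (k : ℕ) (hk₁ : k + 1 < s) (hk₂ : s ≤ k + 2) :
    ∫⁻ x, indicatorSum E a x ^ s ∂σ ≤
      ENNReal.ofReal ((descPochhammer ℝ (k + 1)).eval s ^ ((s - 1) / (s - k - 1))) *
        ∑' i, a i * σ (E i) * lowerMean σ E a i ^ (s - 1) := by
  have : (0 : ℝ) ≤ k := k.cast_nonneg
  have hs : 0 ≤ s - 1 := by linarith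
  rw [lintegral_indicatorSum_rpow_eq_iSup σ hE a (by linarith)]
  refine iSup_le fun S => (lintegral_indicatorSum_rpow_le_of_ne_top hE hσ hmono hchain k hk₁ hk₂
    (lintegral_indicatorSum_finset_rpow_ne_top hE hσ ha (by linarith) S)).trans ?_
  unfold lowerMean
  gcongr <;> exact indicator_le_self _ _ _

end Families

lemma lemmaConst_eq_descPochhammer_rpow {s : ℝ} (hs : 1 < s) :
    lemmaConst s = (descPochhammer ℝ (⌈s - 2⌉₊ + 1)).eval s ^
      ((s - 1) / (s - (⌈s - 2⌉₊ : ℝ) - 1)) := by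
  rw [descPochhammer_eval_eq_prod_range, lemmaConst]
  split_ifs with h
  · simp [Nat.ceil_eq_zero.2 (sub_nonpos.2 h), div_self (sub_pos.2 hs).ne']
  · rfl

lemma ceil_sub_two_add_one_lt {s : ℝ} (hs : 1 < s) : (⌈s - 2⌉₊ : ℝ) + 1 < s := by
  rcases le_or_gt s 2 with h | h
  · simpa [Nat.ceil_eq_zero.2 (sub_nonpos.2 h)] using hs
  · linarith [Nat.ceil_lt_add_one (sub_nonneg.2 h.le)]

lemma lintegral_rpow_le_lemmaConst_mul_tsum {X ι : Type*} [MeasurableSpace X] [Countable ι]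
    {σ : Measure X} {E : ι → Set X} (hE : ∀ i, MeasurableSet (E i)) (hσ : ∀ i, σ (E i) ≠ ∞)
    (hlaminar : ∀ i j, Disjoint (E i) (E j) ∨ E i ⊆ E j ∨ E j ⊆ E i) {s : ℝ} (hs : 1 < s)
    (α : ι → ℝ≥0) :
    (∫⁻ x, (∑' i, (if σ (E i) = 0 then 0 else (α i : ℝ≥0∞) / σ (E i)) *
        (E i).indicator 1 x) ^ s ∂σ) ≤
      ENNReal.ofReal (lemmaConst s) *
        ∑' i, (α i : ℝ≥0∞) * (if σ (E i) = 0 then 0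
          else (σ (E i))⁻¹ * ∑' j : {j // E j ⊆ E i}, (α j : ℝ≥0∞)) ^ (s - 1) := by
  let _ : Preorder ι := Preorder.lift E
  have hchain : ∀ x, IsChain (· ≤ ·) {i | x ∈ E i} := fun x i hi j hj _ =>
    (hlaminar i j).resolve_left (not_disjoint_iff.2 ⟨x, hi, hj⟩)
  set a : ι → ℝ≥0∞ := fun i => if σ (E i) = 0 then 0 else (α i : ℝ≥0∞) / σ (E i) with ha_def
  have ha : ∀ i, a i ≠ ∞ := fun i => by
    by_cases h : σ (E i) = 0 <;> simp [ha_def, h, ENNReal.div_ne_top]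
  have haσ : ∀ i, a i * σ (E i) ≤ α i := fun i => by
    by_cases h : σ (E i) = 0 <;> simp [ha_def, h, ENNReal.div_mul_cancel, hσ]
  refine (lintegral_indicatorSum_rpow_le hE hσ (fun _ _ h => h) hchain ha ⌈s - 2⌉₊
    (ceil_sub_two_add_one_lt hs) (by linarith [Nat.le_ceil (s - 2)])).trans ?_
  rw [lemmaConst_eq_descPochhammer_rpow hs]
  refine mul_le_mul_right (ENNReal.tsum_le_tsum fun i => ?_) _
  by_cases h : σ (E i) = 0
  · simp [h]
  rw [if_neg h, lowerMean, ENNReal.div_eq_inv_mul]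
  exact mul_le_mul' (haσ i) (ENNReal.rpow_le_rpow
    (mul_le_mul_right (ENNReal.tsum_le_tsum fun j : Iic i => haσ j) _) (by linarith))

theorem A1_le_A2_general {X ι : Type*} [MeasurableSpace X] [Countable ι] (σ : Measure X)
    (E : ι → Set X) (hE : ∀ i, MeasurableSet (E i)) (hσ : ∀ i, σ (E i) ≠ ∞)
    (hlaminar : ∀ i j, Disjoint (E i) (E j) ∨ E i ⊆ E j ∨ E j ⊆ E i) (s : ℝ) (hs : 1 < s)
    (α : ι → ℝ≥0) (i₀ : ι) :
    (∫⁻ x in E i₀, (∑' i : {i // E i ⊆ E i₀},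
        (if σ (E i) = 0 then 0 else (α i : ℝ≥0∞) / σ (E i)) * (E i).indicator 1 x) ^ s ∂σ) ≤
      ENNReal.ofReal (lemmaConst s) *
        ∑' i : {i // E i ⊆ E i₀}, (α i : ℝ≥0∞) * (if σ (E i) = 0 then 0
          else (σ (E i))⁻¹ * ∑' j : {j // E j ⊆ E i}, (α j : ℝ≥0∞)) ^ (s - 1) := by
  refine (setLIntegral_le_lintegral _ _).trans
    ((lintegral_rpow_le_lemmaConst_mul_tsum (E := fun i : {i // E i ⊆ E i₀} => E i)
      (fun i => hE i) (fun i => hσ i) (fun i j => hlaminar i j) hs fun i => α i).trans ?_)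
  gcongr with i
  split_ifs
  · rfl
  gcongr
  exact ENNReal.tsum_comp_le_tsum_of_injective
    (f := fun j : {j : {i // E i ⊆ E i₀} // E j ⊆ E i} => (⟨j.1, j.2⟩ : {j // E j ⊆ E i}))
    (fun j l h => Subtype.ext (Subtype.ext (by simpa using h))) fun j => (α j : ℝ≥0∞)

lemma measurableSet_dyadicCube (d : ℕ) (Q : ℤ × (Fin d → ℤ)) : MeasurableSet (dyadicCube d Q) := by
  simp only [dyadicCube]
  measurability

lemma mem_dyadicCube_iff_floor {d : ℕ} {Q : ℤ × (Fin d → ℤ)} {x : Fin d → ℝ} :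
    x ∈ dyadicCube d Q ↔ ∀ i, ⌊x i * 2 ^ Q.1⌋ = Q.2 i := by
  have hpos : (0 : ℝ) < 2 ^ Q.1 := by positivity
  simp only [dyadicCube, mem_ofPred_eq, Int.floor_eq_iff, zpow_neg, ← div_eq_mul_inv,
    div_le_iff₀ hpos, lt_div_iff₀ hpos]

lemma dyadicCube_subset_of_le {d : ℕ} {P Q : ℤ × (Fin d → ℤ)} (hPQ : P.1 ≤ Q.1) {x : Fin d → ℝ}
    (hxP : x ∈ dyadicCube d P) (hxQ : x ∈ dyadicCube d Q) : dyadicCube d Q ⊆ dyadicCube d P := by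
  obtain ⟨n, hn⟩ := Int.le.dest hPQ
  have floor_parent : ∀ t : ℝ, ⌊t * 2 ^ P.1⌋ = ⌊t * 2 ^ Q.1⌋ / (2 ^ n : ℕ) := fun t => by
    rw [← Int.floor_div_natCast, ← hn, zpow_add₀ two_ne_zero, zpow_natCast]
    push_cast
    rw [← mul_assoc, mul_div_cancel_right₀ _ (by positivity)]
  intro y hy
  rw [mem_dyadicCube_iff_floor] at *
  intro i
  rw [floor_parent, hy i, ← hxQ i, ← floor_parent, hxP i]

lemma dyadicCube_disjoint_or_subset {d : ℕ} (P Q : ℤ × (Fin d → ℤ)) :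
    Disjoint (dyadicCube d P) (dyadicCube d Q) ∨
      dyadicCube d P ⊆ dyadicCube d Q ∨ dyadicCube d Q ⊆ dyadicCube d P := by
  refine or_iff_not_imp_left.2 fun h => ?_
  obtain ⟨x, hxP, hxQ⟩ := not_disjoint_iff.1 h
  exact (le_total Q.1 P.1).imp (dyadicCube_subset_of_le · hxQ hxP)
    (dyadicCube_subset_of_le · hxP hxQ)

/-- The estimate `A₁ ≤ c(s) A₂` of Lemma 2.1 (with the convention that
terms with `σ(Q) = 0` vanish). -/
theorem A1_le_A2
    (d : ℕ) (hd : 0 < d) (σ : Measure (Fin d → ℝ))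
    (hσ : ∀ Q, σ (dyadicCube d Q) ≠ ∞)
    (s : ℝ) (hs : 1 < s)
    (α : ℤ × (Fin d → ℤ) → ℝ≥0)
    (Q₀ : ℤ × (Fin d → ℤ)) :
    (∫⁻ x in dyadicCube d Q₀,
        (∑' Q : {Q : ℤ × (Fin d → ℤ) // dyadicCube d Q ⊆ dyadicCube d Q₀},
          (if σ (dyadicCube d Q.1) = 0 then 0
            else (α Q.1 : ℝ≥0∞) / σ (dyadicCube d Q.1)) *
            (dyadicCube d Q.1).indicator 1 x) ^ s ∂σ) ≤
      ENNReal.ofReal (lemmaConst s) *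
        ∑' Q : {Q : ℤ × (Fin d → ℤ) // dyadicCube d Q ⊆ dyadicCube d Q₀},
          (α Q.1 : ℝ≥0∞) *
            (if σ (dyadicCube d Q.1) = 0 then 0
              else (σ (dyadicCube d Q.1))⁻¹ *
                ∑' Q' : {Q' : ℤ × (Fin d → ℤ) // dyadicCube d Q' ⊆ dyadicCube d Q.1},
                  (α Q'.1 : ℝ≥0∞)) ^ (s - 1) := by
  exact A1_le_A2_general σ (dyadicCube d) (measurableSet_dyadicCube d) hσ
    dyadicCube_disjoint_or_subset s hs α Q₀

end
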